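/- arXiv:2603.12428 — 8 statements merged into one kernel-verified Lean document; each statement's English description precedes it below -/
import Mathlib

section
/- Let G be a finite group, N a normal subgroup of G which is a simple non-abelian group, and r an element of N. If the intersection of the conjugacy class O_r^G with N is strictly larger than the orbit O_r^N (that is, O_r^G ∩ N ≠ O_r^N), then the conjugacy class O_r^G is of type C. -/
/-- The orbit of `g` under conjugation by the subgroup `H` of `G`. -/
def convOrbit {G : Type*} [Group G] (H : Subgroup G) (g : G) : Set G :=
  (fun h => h * g * h⁻¹) '' (H : Set G)

/-- A subset `O` of a group `G` (typically a conjugacy class) is of *type C* if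
there are a subgroup `H ≤ G` and elements `r, s ∈ H ∩ O` with `r s ≠ s r`,
`H = ⟨O_r^H ∪ O_s^H⟩`, `O_r^H ≠ O_s^H`, and either both orbits have more than
two elements or one of them has more than four elements. -/
def IsTypeC {G : Type*} [Group G] (O : Set G) : Prop :=
  ∃ (H : Subgroup G) (r s : G),
    r ∈ H ∧ r ∈ O ∧ s ∈ H ∧ s ∈ O ∧
    r * s ≠ s * r ∧
    Subgroup.closure (convOrbit H r ∪ convOrbit H s) = H ∧
    convOrbit H r ≠ convOrbit H s ∧
    ((2 < (convOrbit H r).ncard ∧ 2 < (convOrbit H s).ncard) ∨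
      4 < (convOrbit H r).ncard ∨ 4 < (convOrbit H s).ncard)

theorem closure_convOrbit_aux {G : Type*} [Group G] (N : Subgroup G)
    [IsSimpleGroup N] (r : G) (hr : r ∈ N) (h1 : r ≠ 1) :
    Subgroup.closure (convOrbit N r) = N := by
  have e : convOrbit N r = N.subtype '' (Group.conjugatesOfSet {(⟨r, hr⟩ : N)}) := by
    ext x
    simp only [convOrbit, Set.mem_image, Group.mem_conjugatesOfSet_iff, Set.mem_singleton_iff,
      exists_eq_left, isConj_iff]
    constructor
    · rintro ⟨h, hh, rfl⟩
      exact ⟨⟨h, hh⟩ * ⟨r, hr⟩ * ⟨h, hh⟩⁻¹, ⟨⟨h, hh⟩, rfl⟩, rfl⟩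
    · rintro ⟨y, ⟨c, rfl⟩, rfl⟩
      exact ⟨c, c.2, rfl⟩
  rw [e, ← MonoidHom.map_closure]
  have hn : Subgroup.normalClosure {(⟨r, hr⟩ : N)} = ⊤ := by
    rcases (Subgroup.normalClosure_normal (s := {(⟨r, hr⟩ : N)})).eq_bot_or_eq_top with hb | ht
    · exfalso
      have hm : (⟨r, hr⟩ : N) ∈ Subgroup.normalClosure {(⟨r, hr⟩ : N)} :=
        Subgroup.subset_normalClosure rfl
      rw [hb, Subgroup.mem_bot] at hm
      exact h1 (congrArg Subtype.val hm)
    · exact ht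
  change Subgroup.map N.subtype (Subgroup.normalClosure {(⟨r, hr⟩ : N)}) = N
  rw [hn, ← MonoidHom.range_eq_map, Subgroup.range_subtype]

theorem eq_one_aux {G : Type*} [Group G] (N : Subgroup G)
    [IsSimpleGroup N] (hna : ∃ a b : N, a * b ≠ b * a) (r : G) (hr : r ∈ N) (h1 : r ≠ 1)
    (x : G) (hx : x ∈ N) (hc : ∀ y ∈ convOrbit N r, x * y = y * x) : x = 1 := by
  have hle : N ≤ Subgroup.centralizer {x} := by
    rw [← closure_convOrbit_aux N r hr h1, Subgroup.closure_le]
    intro y hy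
    rw [SetLike.mem_coe, Subgroup.mem_centralizer_singleton_iff]
    first | exact hc y hy | exact (hc y hy).symm
  have hz : (⟨x, hx⟩ : N) ∈ Subgroup.center N := by
    rw [Subgroup.mem_center_iff]
    intro g
    have := Subgroup.mem_centralizer_singleton_iff.1 (hle g.2)
    apply Subtype.ext
    first | exact this | exact this.symm
  rcases (inferInstance : (Subgroup.center N).Normal).eq_bot_or_eq_top with hb | ht
  · rw [hb, Subgroup.mem_bot] at hz
    exact congrArg Subtype.val hz
  · obtain ⟨a, b, hab⟩ := hna
    have hb : b ∈ Subgroup.center N := by rw [ht]; trivial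
    exact absurd (Subgroup.mem_center_iff.1 hb a) hab

theorem self_mem_aux {G : Type*} [Group G] (N : Subgroup G) (r : G) : r ∈ convOrbit N r :=
  ⟨1, N.one_mem, by simp⟩

theorem card_aux {G : Type*} [Group G] [Finite G] (N : Subgroup G)
    [IsSimpleGroup N] (hna : ∃ a b : N, a * b ≠ b * a) (r : G) (hr : r ∈ N) (h1 : r ≠ 1) :
    2 < (convOrbit N r).ncard := by
  by_contra hlt
  apply h1
  apply eq_one_aux N hna r hr h1 r hr
  intro y hy
  by_contra hne
  apply hlt
  have hz : r * y * r⁻¹ ∈ convOrbit N r := by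
    obtain ⟨h, hh, rfl⟩ := hy
    exact ⟨r * h, N.mul_mem hr hh, by simp [mul_assoc]⟩
  rw [Set.two_lt_ncard (Set.toFinite _)]
  refine ⟨r, self_mem_aux N r, y, hy, _, hz, ?_, ?_, ?_⟩
  · rintro rfl; exact hne rfl
  · intro h
    have h2 : y = r := by
      have := eq_mul_inv_iff_mul_eq.1 h
      exact (mul_left_cancel this).symm
    exact hne (by rw [h2])
  · intro h
    exact hne (eq_mul_inv_iff_mul_eq.1 h).symm

/-- If `N` is a normal simple non-abelian subgroup of a finite group `G`, `r ∈ N`, and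
`O_r^G ∩ N ≠ O_r^N`, then the conjugacy class `O_r^G` is of type C. -/
theorem stmt0 {G : Type*} [Group G] [Finite G] (N : Subgroup G) [N.Normal]
    [IsSimpleGroup N] (hna : ∃ a b : N, a * b ≠ b * a)
    (r : G) (hr : r ∈ N)
    (h : convOrbit (⊤ : Subgroup G) r ∩ (N : Set G) ≠ convOrbit N r) :
    IsTypeC (convOrbit (⊤ : Subgroup G) r) := by
  have hsub : convOrbit N r ⊆ convOrbit (⊤ : Subgroup G) r ∩ (N : Set G) := by
    rintro _ ⟨g, hg, rfl⟩
    exact ⟨⟨g, trivial, rfl⟩, N.mul_mem (N.mul_mem hg hr) (N.inv_mem hg)⟩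
  obtain ⟨s, ⟨hsO, hsN⟩, hs⟩ : ∃ s ∈ convOrbit (⊤ : Subgroup G) r ∩ (N : Set G),
      s ∉ convOrbit N r := by
    by_contra hcon
    push Not at hcon
    exact h (Set.Subset.antisymm hcon hsub)
  have h1 : r ≠ 1 := by
    rintro rfl
    obtain ⟨g, _, rfl⟩ := hsO
    exact hs ⟨1, N.one_mem, by simp⟩
  have hs1 : s ≠ 1 := by
    rintro rfl
    obtain ⟨g, _, hg⟩ := hsO
    exact h1 (conj_eq_one_iff.1 hg)
  obtain ⟨t, ht, hrt⟩ : ∃ t ∈ convOrbit N s, r * t ≠ t * r := by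
    by_contra hcon
    push Not at hcon
    exact h1 (eq_one_aux N hna s hsN hs1 r hr hcon)
  obtain ⟨g, hg, rfl⟩ := ht
  have hg : g ∈ N := hg
  have htN : g * s * g⁻¹ ∈ N := N.mul_mem (N.mul_mem hg hsN) (N.inv_mem hg)
  refine ⟨N, r, g * s * g⁻¹, hr, self_mem_aux _ r, htN, ?_, hrt, ?_, ?_, Or.inl
    ⟨card_aux N hna r hr h1, card_aux N hna _ htN ?_⟩⟩
  · obtain ⟨k, _, rfl⟩ := hsO
    exact ⟨g * k, trivial, by simp [mul_assoc]⟩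
  · apply le_antisymm
    · rw [Subgroup.closure_le]
      rintro x (⟨k, hk, rfl⟩ | ⟨k, hk, rfl⟩)
      · exact N.mul_mem (N.mul_mem hk hr) (N.inv_mem hk)
      · exact N.mul_mem (N.mul_mem hk htN) (N.inv_mem hk)
    · conv_lhs => rw [← closure_convOrbit_aux N r hr h1]
      exact Subgroup.closure_mono Set.subset_union_left
  · intro he
    apply hs
    rw [he]
    exact ⟨g⁻¹, N.inv_mem hg, by simp [mul_assoc]⟩
  · intro h2
    exact hs1 (conj_eq_one_iff.1 h2)
end

section
/- Let G be a finite group, M ≤ G a quasi-simple subgroup, T ≤ G an abelian subgroup contained in the normalizer N_G(M), and r ∈ T. Assume that: (n) r does not centralize M (there is m ∈ M with r m ≠ m r); and (w) there exists x ∈ O_r^G ∩ T such that x ∉ O_r^M and x does not centralize M. Then the conjugacy class O_r^G is of type C. -/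
/-- A group is quasi-simple if it is nontrivial, perfect, and its central quotient is simple. -/
def IsQuasiSimple (M : Type*) [Group M] : Prop :=
  Nontrivial M ∧ commutator M = ⊤ ∧ IsSimpleGroup (M ⧸ Subgroup.center M)

lemma aux_perfect {G : Type*} [Group G] (M : Subgroup G) (hQS : IsQuasiSimple M)
    (K : Subgroup G) (h : ∀ a ∈ M, ∀ b ∈ M, a * b * a⁻¹ * b⁻¹ ∈ K) : M ≤ K := by
  have h1 : commutator M ≤ K.subgroupOf M := by
    rw [commutator_def, Subgroup.commutator_le]
    intro a _ b _
    rw [Subgroup.mem_subgroupOf]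
    simpa [commutatorElement_def] using h a a.2 b b.2
  rw [hQS.2.1] at h1
  intro m hm
  exact Subgroup.mem_subgroupOf.1 (h1 (Subgroup.mem_top (⟨m, hm⟩ : M)))

lemma aux_simple {G : Type*} [Group G] (M : Subgroup G) (hQS : IsQuasiSimple M)
    (K : Subgroup G) (hn : ∀ m ∈ M, ∀ k ∈ K, m * k * m⁻¹ ∈ K) :
    (∀ k ∈ K, k ∈ M → ∀ m ∈ M, k * m = m * k) ∨ M ≤ K := by
  have hN : (K.subgroupOf M).Normal := ⟨fun k hk g => by
    rw [Subgroup.mem_subgroupOf] at *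
    simpa using hn g g.2 k hk⟩
  have hs := hQS.2.2
  have hN' := hN.map (QuotientGroup.mk' (Subgroup.center M)) (QuotientGroup.mk'_surjective _)
  rcases hN'.eq_bot_or_eq_top with h | h
  · left
    intro k hk hkM m hm
    rw [Subgroup.map_eq_bot_iff, QuotientGroup.ker_mk'] at h
    have := h (x := ⟨k, hkM⟩) (Subgroup.mem_subgroupOf.2 hk)
    rw [Subgroup.mem_center_iff] at this
    have := this ⟨m, hm⟩
    exact (congrArg Subtype.val this).symm
  · right
    have key : ∀ a ∈ M, ∃ k ∈ K, k ∈ M ∧ ∃ z ∈ M, (∀ m ∈ M, m * z = z * m) ∧ a = k * z := by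
      intro a ha
      have : (QuotientGroup.mk' (Subgroup.center M)) ⟨a, ha⟩ ∈
        (K.subgroupOf M).map (QuotientGroup.mk' (Subgroup.center M)) := by rw [h]; trivial
      obtain ⟨k, hk, hka⟩ := this
      have h2 := QuotientGroup.eq.1 hka
      rw [Subgroup.mem_center_iff] at h2
      refine ⟨k, hk, k.2, k⁻¹ * a, M.mul_mem (M.inv_mem k.2) ha, ?_, by simp⟩
      intro m hm
      exact congrArg Subtype.val (h2 ⟨m, hm⟩)
    apply aux_perfect M hQS
    intro a ha b hb
    obtain ⟨k, hk, hkM, z, hz, hzc, rfl⟩ := key a ha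
    obtain ⟨l, hl, hlM, w, hw, hwc, rfl⟩ := key b hb
    have e : (k * z) * (l * w) * (k * z)⁻¹ * (l * w)⁻¹ = k * l * k⁻¹ * l⁻¹ := by
      calc _ = k * (z * (l * w)) * z⁻¹ * k⁻¹ * w⁻¹ * l⁻¹ := by group
        _ = k * l * (w * k⁻¹) * w⁻¹ * l⁻¹ := by
          rw [← hzc _ (M.mul_mem hlM hw)]; group
        _ = _ := by rw [← hwc _ (M.inv_mem hkM)]; group
    rw [e]
    exact K.mul_mem (K.mul_mem (K.mul_mem hk hl) (K.inv_mem hk)) (K.inv_mem hl)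

lemma aux_gen {G : Type*} [Group G] (M : Subgroup G) (hQS : IsQuasiSimple M) (r : G)
    (hr : r ∈ Subgroup.normalizer (M : Set G)) (hn : ∃ m ∈ M, r * m ≠ m * r) :
    M ≤ Subgroup.closure (convOrbit M r) := by
  have horb : ∀ m ∈ M, m * r * m⁻¹ ∈ Subgroup.closure (convOrbit M r) :=
    fun m hm => Subgroup.subset_closure ⟨m, hm, rfl⟩
  have hrL : r ∈ Subgroup.closure (convOrbit M r) := by simpa using horb 1 M.one_mem
  have hrM : ∀ m ∈ M, r * m * r⁻¹ ∈ M := fun m hm => (Subgroup.mem_normalizer_iff.1 hr m).1 hm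
  have hnorm : ∀ m ∈ M, ∀ k ∈ Subgroup.closure (convOrbit M r),
      m * k * m⁻¹ ∈ Subgroup.closure (convOrbit M r) := by
    intro m hm k hk
    have : Subgroup.closure (convOrbit M r) ≤
        (Subgroup.closure (convOrbit M r)).comap (MulAut.conj m).toMonoidHom := by
      rw [Subgroup.closure_le]
      rintro _ ⟨a, ha, rfl⟩
      have := horb (m * a) (M.mul_mem hm ha)
      simpa [mul_assoc] using this
    simpa using this hk
  rcases aux_simple M hQS (Subgroup.closure (convOrbit M r)) hnorm with h | h
  · exfalso
    have hc : ∀ a ∈ M, ∀ m ∈ M, (a * r * a⁻¹ * r⁻¹) * m = m * (a * r * a⁻¹ * r⁻¹) := by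
      intro a ha
      refine h _ (Subgroup.mul_mem _ (horb a ha) (Subgroup.inv_mem _ hrL)) ?_
      have := M.mul_mem ha (hrM _ (M.inv_mem ha))
      simpa [mul_assoc] using this
    have : M ≤ Subgroup.centralizer {r} := by
      apply aux_perfect M hQS
      intro a ha b hb
      rw [Subgroup.mem_centralizer_singleton_iff]
      have key : ∀ a ∈ M, ∃ z, (∀ m ∈ M, z * m = m * z) ∧ r * a * r⁻¹ = a * z := by
        intro a ha
        refine ⟨a⁻¹ * r * a * r⁻¹, ?_, by group⟩
        simpa using hc _ (M.inv_mem ha)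
      obtain ⟨z, hz, hza⟩ := key a ha
      obtain ⟨w, hw, hwb⟩ := key b hb
      have e : r * (a * b * a⁻¹ * b⁻¹) * r⁻¹ = a * b * a⁻¹ * b⁻¹ := by
        calc _ = (r * a * r⁻¹) * (r * b * r⁻¹) * (r * a * r⁻¹)⁻¹ * (r * b * r⁻¹)⁻¹ := by group
          _ = a * (z * (b * w)) * z⁻¹ * a⁻¹ * w⁻¹ * b⁻¹ := by rw [hza, hwb]; group
          _ = a * b * (w * a⁻¹) * w⁻¹ * b⁻¹ := by
            rw [hz (b * w) (by
              have := M.mul_mem (M.inv_mem hb) (hrM b hb)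
              rw [hwb, inv_mul_cancel_left] at this
              exact M.mul_mem hb this)]
            group
          _ = _ := by rw [hw _ (M.inv_mem ha)]; group
      first
        | exact (mul_inv_eq_iff_eq_mul.1 e)
        | exact (mul_inv_eq_iff_eq_mul.1 e).symm
    obtain ⟨m, hm, hne⟩ := hn
    have h2 := Subgroup.mem_centralizer_singleton_iff.1 (this hm)
    first
      | exact hne h2
      | exact hne h2.symm
  · exact h

lemma aux_card {G : Type*} [Group G] [Finite G] (M : Subgroup G) (hQS : IsQuasiSimple M) (r : G)
    (hn : ∃ m ∈ M, r * m ≠ m * r) : 2 < (convOrbit M r).ncard := by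
  by_contra hlt
  have three : ∀ b ∈ M, ∀ c ∈ M, b ∉ Subgroup.centralizer {r} → c ∉ Subgroup.centralizer {r} →
      b * c ∈ Subgroup.centralizer {r} := by
    intro b hb c hc hbC hcC
    rw [Subgroup.mem_centralizer_singleton_iff] at *
    by_contra hne
    apply hlt
    rw [Set.two_lt_ncard_iff (Set.toFinite _)]
    refine ⟨r, b⁻¹ * r * b, c * r * c⁻¹, ⟨1, M.one_mem, by simp⟩,
      ⟨b⁻¹, M.inv_mem hb, by simp⟩, ⟨c, hc, rfl⟩, ?_, ?_, ?_⟩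
    · intro h
      have : b * r = r * b := by
        calc b * r = b * (b⁻¹ * r * b) := by rw [← h]
          _ = _ := by group
      first | exact hbC this | exact hbC this.symm
    · intro h
      have : c * r = r * c := by
        calc c * r = (c * r * c⁻¹) * c := by group
          _ = _ := by rw [← h]
      first | exact hcC this | exact hcC this.symm
    · intro h
      have : r * (b * c) = b * c * r := by
        calc _ = b * (b⁻¹ * r * b) * c := by group
          _ = _ := by rw [h]; group
      first | exact hne this | exact hne this.symm
  have : M ≤ Subgroup.centralizer {r} := by
    apply aux_perfect M hQS
    generalize Subgroup.centralizer {r} = C at three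
    intro a ha b hb
    have hai := M.inv_mem ha
    have hbi := M.inv_mem hb
    by_cases h1 : a ∈ C <;> by_cases h2 : b ∈ C
    · exact C.mul_mem (C.mul_mem (C.mul_mem h1 h2) (C.inv_mem h1)) (C.inv_mem h2)
    · have : b * a⁻¹ ∉ C := fun h => h2 ((C.mul_mem_cancel_right (C.inv_mem h1)).1 h)
      have := three _ (M.mul_mem hb hai) _ hbi this (fun h => h2 (C.inv_mem_iff.1 h))
      simpa [mul_assoc] using C.mul_mem h1 this
    · have : a * b ∉ C := fun h => h1 ((C.mul_mem_cancel_right h2).1 h)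
      have := three _ (M.mul_mem ha hb) _ hai this (fun h => h1 (C.inv_mem_iff.1 h))
      exact C.mul_mem this (C.inv_mem h2)
    · have h3 := three _ ha _ hb h1 h2
      have h4 := three _ hai _ hbi (fun h => h1 (C.inv_mem_iff.1 h)) (fun h => h2 (C.inv_mem_iff.1 h))
      simpa [mul_assoc] using C.mul_mem h3 h4
  obtain ⟨m, hm, hne⟩ := hn
  have h2 := Subgroup.mem_centralizer_singleton_iff.1 (this hm)
  first
    | exact hne h2
    | exact hne h2.symm

lemma aux_orb {G : Type*} [Group G] (M T H : Subgroup G)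
    (hTab : ∀ a ∈ T, ∀ b ∈ T, a * b = b * a) (hMH : M ≤ H)
    (hH : ∀ h ∈ H, ∃ m ∈ M, ∃ t ∈ T, h = m * t) (r : G) (hr : r ∈ T) (m₀ : G) (hm₀ : m₀ ∈ M) :
    convOrbit H (m₀ * r * m₀⁻¹) = convOrbit M r := by
  apply Set.Subset.antisymm
  · rintro _ ⟨h, hh, rfl⟩
    obtain ⟨m, hm, t, ht, e⟩ := hH (h * m₀) (H.mul_mem hh (hMH hm₀))
    refine ⟨m, hm, ?_⟩
    show m * r * m⁻¹ = h * (m₀ * r * m₀⁻¹) * h⁻¹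
    calc m * r * m⁻¹ = m * (r * t) * t⁻¹ * m⁻¹ := by group
      _ = (m * t) * r * (m * t)⁻¹ := by rw [hTab r hr t ht]; group
      _ = _ := by rw [← e]; group
  · rintro _ ⟨m, hm, rfl⟩
    exact ⟨m * m₀⁻¹, hMH (M.mul_mem hm (M.inv_mem hm₀)), by simp [mul_assoc]⟩

theorem stmt1 {G : Type*} [Group G] [Finite G] (M T : Subgroup G)
    (hQS : IsQuasiSimple M)
    (hT : T ≤ Subgroup.normalizer (M : Set G)) (hTab : ∀ a ∈ T, ∀ b ∈ T, a * b = b * a)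
    (r : G) (hr : r ∈ T)
    (hn : ∃ m ∈ M, r * m ≠ m * r)
    (hw : ∃ x, x ∈ convOrbit (⊤ : Subgroup G) r ∧ x ∈ T ∧
      x ∉ convOrbit M r ∧ ∃ m ∈ M, x * m ≠ m * x) :
    IsTypeC (convOrbit (⊤ : Subgroup G) r) := by
  obtain ⟨x, ⟨g, -, hg⟩, hxT, hxr, hxn⟩ := hw
  have hgr := aux_gen M hQS r (hT hr) hn
  have hgx := aux_gen M hQS x (hT hxT) hxn
  have hs : ∃ m ∈ M, r * (m * x * m⁻¹) ≠ (m * x * m⁻¹) * r := by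
    by_contra! hcon
    have h1 : Subgroup.closure (convOrbit M x) ≤ Subgroup.centralizer {r} := by
      rw [Subgroup.closure_le]
      rintro _ ⟨m, hm, rfl⟩
      rw [SetLike.mem_coe, Subgroup.mem_centralizer_singleton_iff]
      first | exact hcon m hm | exact (hcon m hm).symm
    obtain ⟨m, hm, hne⟩ := hn
    have h2 := Subgroup.mem_centralizer_singleton_iff.1 (h1 (hgx hm))
    first
      | exact hne h2
      | exact hne h2.symm
  obtain ⟨m₀, hm₀, hne⟩ := hs
  set H := Subgroup.closure (convOrbit M r ∪ convOrbit M x) with hHdef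
  have hMH : M ≤ H := hgr.trans (Subgroup.closure_mono Set.subset_union_left)
  have hHle : H ≤ M ⊔ T := by
    rw [hHdef, Subgroup.closure_le]
    have : ∀ y ∈ T, convOrbit M y ⊆ (M ⊔ T : Subgroup G) := by
      rintro y hy _ ⟨m, hm, rfl⟩
      have hm' : m ∈ M ⊔ T := (le_sup_left : M ≤ M ⊔ T) hm
      have hy' : y ∈ M ⊔ T := (le_sup_right : T ≤ M ⊔ T) hy
      exact Subgroup.mul_mem _ (Subgroup.mul_mem _ hm' hy') (Subgroup.inv_mem _ hm')
    exact Set.union_subset (this r hr) (this x hxT)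
  have hHdec : ∀ h ∈ H, ∃ m ∈ M, ∃ t ∈ T, h = m * t := by
    intro h hh
    have h1 : h ∈ ((M ⊔ T : Subgroup G) : Set G) := hHle hh
    rw [Subgroup.coe_mul_of_right_le_normalizer_left M T hT] at h1
    obtain ⟨m, hm, t, ht, e⟩ := h1
    exact ⟨m, hm, t, ht, e.symm⟩
  have hor : convOrbit H r = convOrbit M r := by
    simpa using aux_orb M T H hTab hMH hHdec r hr 1 M.one_mem
  have hox := aux_orb M T H hTab hMH hHdec x hxT m₀ hm₀
  have hxx : x ∈ convOrbit M x := ⟨1, M.one_mem, by simp⟩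
  refine ⟨H, r, m₀ * x * m₀⁻¹, ?_, ⟨1, trivial, by simp⟩, ?_, ⟨m₀ * g, trivial, ?_⟩, hne, ?_, ?_, ?_⟩
  · exact Subgroup.subset_closure (Or.inl ⟨1, M.one_mem, by simp⟩)
  · exact Subgroup.subset_closure (Or.inr ⟨m₀, hm₀, rfl⟩)
  · rw [← hg]; simp [mul_assoc]
  · rw [hor, hox]
  · rw [hor, hox]
    intro h
    exact hxr (h ▸ hxx)
  · rw [hor, hox]
    exact Or.inl ⟨aux_card M hQS r hn, aux_card M hQS x hxn⟩
end

section
/- Let G be a finite group, M ≤ G a subgroup, T ≤ G an abelian subgroup contained in the normalizer N_G(M), and r ∈ T. Suppose there exists s ∈ O_r^G ∩ T with s ∉ O_r^M, and let H be the subgroup of G generated by M ∪ {r, s}. Then the conjugation orbits O_s^H and O_r^H are distinct. -/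
/-- Lemma: let `M ≤ G`, `T ≤ N_G(M)` abelian, `r ∈ T`, and suppose there is
`s ∈ O_r^G ∩ T` with `s ∉ O_r^M`.  If `H = ⟨M ∪ {r, s}⟩`, then `O_s^H ≠ O_r^H`. -/
theorem stmt2 {G : Type*} [Group G] [Finite G] (M T : Subgroup G)
    (hT : T ≤ Subgroup.normalizer (M : Set G)) (hTab : ∀ a ∈ T, ∀ b ∈ T, a * b = b * a)
    (r : G) (hr : r ∈ T)
    (s : G) (hs : s ∈ convOrbit (⊤ : Subgroup G) r) (hsT : s ∈ T)
    (hsM : s ∉ convOrbit M r) :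
    convOrbit (Subgroup.closure ((M : Set G) ∪ {r, s})) s ≠
      convOrbit (Subgroup.closure ((M : Set G) ∪ {r, s})) r := by
  have key : ∀ h ∈ Subgroup.closure ((M : Set G) ∪ {r, s}), ∃ m ∈ M, ∃ t ∈ T, h = m * t := by
    intro h hh
    induction hh using Subgroup.closure_induction with
    | mem x hx =>
      rcases hx with hx | hx | hx
      · exact ⟨x, hx, 1, T.one_mem, by simp⟩
      · exact ⟨1, M.one_mem, x, hx ▸ hr, by simp⟩
      · exact ⟨1, M.one_mem, x, hx ▸ hsT, by simp⟩
    | one => exact ⟨1, M.one_mem, 1, T.one_mem, by simp⟩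
    | mul x y _ _ hx hy =>
      obtain ⟨m, hm, t, ht, rfl⟩ := hx
      obtain ⟨m', hm', t', ht', rfl⟩ := hy
      exact ⟨m * (t * m' * t⁻¹), M.mul_mem hm ((Subgroup.mem_normalizer_iff.1 (hT ht) m').1 hm'),
        t * t', T.mul_mem ht ht', by group⟩
    | inv x _ hx =>
      obtain ⟨m, hm, t, ht, rfl⟩ := hx
      exact ⟨t⁻¹ * m⁻¹ * t⁻¹⁻¹,
        (Subgroup.mem_normalizer_iff.1 (hT (T.inv_mem ht)) m⁻¹).1 (M.inv_mem hm),
        t⁻¹, T.inv_mem ht, by group⟩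
  intro heq
  have h1 : s ∈ convOrbit (Subgroup.closure ((M : Set G) ∪ {r, s})) s :=
    ⟨1, Subgroup.one_mem _, by simp⟩
  rw [heq] at h1
  obtain ⟨h, hh, e⟩ := h1
  obtain ⟨m, hm, t, ht, rfl⟩ := key h hh
  refine hsM ⟨m, hm, ?_⟩
  rw [← e]
  have hc : t * r * t⁻¹ = r := by rw [hTab t ht r hr]; group
  calc m * r * m⁻¹ = m * (t * r * t⁻¹) * m⁻¹ := by rw [hc]
    _ = m * t * r * (m * t)⁻¹ := by group
end

section
/- Let G be a finite group and M ≤ G a quasi-simple subgroup. Let y be an element of the normalizer N_G(M) which does not centralize M, and let K be the subgroup of G generated by M ∪ {y}. Then the subgroup of G generated by the conjugation orbit O_y^K is equal to K, and O_y^K has at least 3 elements. -/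
theorem perfect_le_ker {M A : Type*} [Group M] [Group A] (hA : ∀ a b : A, a * b = b * a)
    (h : commutator M = ⊤) (f : M →* A) (m : M) : f m = 1 := by
  have : commutator M ≤ f.ker := by
    rw [commutator_def, Subgroup.commutator_le]
    intro g _ k _
    rw [MonoidHom.mem_ker, commutatorElement_def, map_mul, map_mul, map_mul, hA (f g) (f k)]
    simp
  rw [h] at this
  exact this (Subgroup.mem_top m)

theorem qs_normal {M : Type*} [Group M] (h : IsQuasiSimple M) (B : Subgroup M) [hB : B.Normal] :
    B ≤ Subgroup.center M ∨ B = ⊤ := by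
  obtain ⟨-, hp, hs⟩ := h
  have hn : (B.map (QuotientGroup.mk' (Subgroup.center M))).Normal :=
    hB.map _ (QuotientGroup.mk'_surjective _)
  rcases hn.eq_bot_or_eq_top with h1 | h1
  · left
    rw [Subgroup.map_eq_bot_iff, QuotientGroup.ker_mk'] at h1
    exact h1
  · right
    rw [eq_top_iff, ← hp, commutator_def, Subgroup.commutator_le]
    intro g _ k _
    have hg : (QuotientGroup.mk' (Subgroup.center M)) g ∈
      B.map (QuotientGroup.mk' (Subgroup.center M)) := by rw [h1]; trivial
    obtain ⟨b, hb, hbg⟩ := hg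
    obtain ⟨z, hz, rfl⟩ := (QuotientGroup.mk'_eq_mk' _).1 hbg
    have hzk := Subgroup.mem_center_iff.1 hz k
    have : b * z * k * (b * z)⁻¹ * k⁻¹ = b * (k * b⁻¹ * k⁻¹) := by
      rw [mul_assoc b z k, ← hzk]
      group
    rw [commutatorElement_def, this]
    exact B.mul_mem hb (hB.conj_mem _ (B.inv_mem hb) _)

theorem index_gt_two {M : Type*} [Group M] [Finite M] (hp : commutator M = ⊤) (C : Subgroup M)
    (hC : C ≠ ⊤) : 3 ≤ C.index := by
  by_contra hlt
  have h0 : C.index ≠ 0 := Subgroup.index_ne_zero_of_finite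
  have h1 : C.index ≠ 1 := fun h => hC (Subgroup.index_eq_one.1 h)
  have h2 : C.index = 2 := by omega
  have := Subgroup.normal_of_index_eq_two h2
  apply hC
  rw [eq_top_iff, ← hp, commutator_def, Subgroup.commutator_le]
  intro g _ k _
  rw [commutatorElement_def]
  simp only [Subgroup.mul_mem_iff_of_index_two h2, inv_mem_iff]
  tauto

/-- Lemma: if `M ≤ G` is quasi-simple and `y ∈ N_G(M)` does not centralize `M`,
then, with `K = ⟨M ∪ {y}⟩`, the subgroup generated by the conjugation orbit `O_y^K`
equals `K`, and `O_y^K` has at least three elements. -/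
theorem stmt3 {G : Type*} [Group G] [Finite G] (M : Subgroup G)
    (hQS : IsQuasiSimple M)
    (y : G) (hy : y ∈ Subgroup.normalizer (M : Set G)) (hyc : ∃ m ∈ M, y * m ≠ m * y) :
    Subgroup.closure (convOrbit (Subgroup.closure ((M : Set G) ∪ {y})) y) =
      Subgroup.closure ((M : Set G) ∪ {y}) ∧
    3 ≤ (convOrbit (Subgroup.closure ((M : Set G) ∪ {y})) y).ncard := by
  have hMK : M ≤ Subgroup.closure ((M : Set G) ∪ {y}) := fun m hm =>
    Subgroup.subset_closure (Or.inl hm)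
  have hyK : y ∈ Subgroup.closure ((M : Set G) ∪ {y}) := Subgroup.subset_closure (Or.inr rfl)
  have hKle : ∀ L : Subgroup G, M ≤ L → y ∈ L → Subgroup.closure ((M : Set G) ∪ {y}) ≤ L := by
    intro L h1 h2
    rw [Subgroup.closure_le]
    rintro x (hx | rfl)
    · exact h1 hx
    · exact h2
  generalize Subgroup.closure ((M : Set G) ∪ {y}) = K at *
  constructor
  · apply le_antisymm
    · rw [Subgroup.closure_le]
      rintro _ ⟨h, hh, rfl⟩
      exact K.mul_mem (K.mul_mem hh hyK) (K.inv_mem hh)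
    · have horb : ∀ k ∈ K, k * y * k⁻¹ ∈ Subgroup.closure (convOrbit K y) := fun k hk =>
        Subgroup.subset_closure ⟨k, hk, rfl⟩
      have hyN : y ∈ Subgroup.closure (convOrbit K y) := by simpa using horb 1 K.one_mem
      have hconj : ∀ k ∈ K, ∀ n ∈ Subgroup.closure (convOrbit K y),
          k * n * k⁻¹ ∈ Subgroup.closure (convOrbit K y) := by
        intro k hk n hn
        induction hn using Subgroup.closure_induction with
        | mem x hx =>
          obtain ⟨h, hh, rfl⟩ := hx
          have := horb (k * h) (K.mul_mem hk hh)
          convert this using 1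
          group
        | one => simp
        | mul a b _ _ ha hb =>
          convert Subgroup.mul_mem _ ha hb using 1
          group
        | inv a _ ha =>
          convert Subgroup.inv_mem _ ha using 1
          group
      generalize Subgroup.closure (convOrbit K y) = N at *
      refine hKle N ?_ hyN
      have hnorm : (N.subgroupOf M).Normal := ⟨fun n hn g => by
        rw [Subgroup.mem_subgroupOf] at hn ⊢
        exact hconj g (hMK g.2) n hn⟩
      rcases qs_normal hQS (N.subgroupOf M) with hc | ht
      · exfalso
        have hmem : ∀ m : M, (m : G) * y * (m : G)⁻¹ * y⁻¹ ∈ M := by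
          intro m
          have h1 := (Subgroup.mem_normalizer_iff.1 hy (m : G)⁻¹).1 (M.inv_mem m.2)
          convert M.mul_mem m.2 h1 using 1
          group
        have hcen : ∀ m : M, (⟨_, hmem m⟩ : M) ∈ Subgroup.center M := by
          intro m
          apply hc
          rw [Subgroup.mem_subgroupOf]
          exact N.mul_mem (horb _ (hMK m.2)) (N.inv_mem hyN)
        let f : M →* Subgroup.center M := MonoidHom.mk' (fun m => ⟨_, hcen m⟩) (by
          intro a b
          apply Subtype.ext
          apply Subtype.ext
          have h1 := congrArg Subtype.val (Subgroup.mem_center_iff.1 (hcen b) a)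
          have h2 := congrArg Subtype.val (Subgroup.mem_center_iff.1 (hcen b) ⟨_, hmem a⟩)
          simp only [Subgroup.coe_mul] at h1 h2 ⊢
          rw [h2]
          calc _ = ((a : G) * (b * y * (b : G)⁻¹ * y⁻¹)) * y * (a : G)⁻¹ * y⁻¹ := by group
            _ = _ := by rw [h1]; group)
        obtain ⟨m, hm, hne⟩ := hyc
        have h1 := perfect_le_ker (fun a b => Subtype.ext (Subgroup.mem_center_iff.1 b.2 a)) hQS.2.1 f ⟨m, hm⟩
        have h2 : m * y * m⁻¹ * y⁻¹ = 1 := congrArg (fun z : Subgroup.center M => ((z : M) : G)) h1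
        apply hne
        rw [mul_inv_eq_one, mul_inv_eq_iff_eq_mul] at h2
        exact h2.symm
      · exact Subgroup.subgroupOf_eq_top.1 ht
  · let _ : MulAction M G := MulAction.compHom G ((MulAut.conj (G := G)).comp M.subtype)
    have hsm : ∀ m : M, m • y = m * y * (m : G)⁻¹ := fun m => rfl
    have h3 : 3 ≤ (MulAction.stabilizer M y).index := by
      apply index_gt_two hQS.2.1
      intro h
      obtain ⟨m, hm, hne⟩ := hyc
      have h1 : (⟨m, hm⟩ : M) ∈ MulAction.stabilizer M y := by rw [h]; trivial
      rw [MulAction.mem_stabilizer_iff, hsm, mul_inv_eq_iff_eq_mul] at h1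
      exact hne h1.symm
    rw [MulAction.index_stabilizer] at h3
    refine h3.trans (Set.ncard_le_ncard ?_ (Set.toFinite _))
    rintro _ ⟨m, rfl⟩
    exact ⟨m, hMK m.2, rfl⟩
end

section
/- Let Γ be a finite abelian additive group and 𝔱 an automorphism of Γ whose only fixed point is 0. Form the semidirect product G = Γ ⋊ ℤ in which n ∈ ℤ acts on Γ as 𝔱ⁿ. Then the conjugacy class of the element (0, 1) in G is exactly the set {(a, 1) : a ∈ Γ}; in particular, this conjugacy class has exactly |Γ| elements. -/
/-- The action of `ℤ` (written multiplicatively) on `Γ` (written multiplicatively)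
in which `n` acts as the `n`-th power of the automorphism `t`. -/
def tAction {Γ : Type*} [AddCommGroup Γ] (t : Γ ≃+ Γ) :
    Multiplicative ℤ →* MulAut (Multiplicative Γ) :=
  zpowersHom (MulAut (Multiplicative Γ)) (AddEquiv.toMultiplicative t)

/-- Let `Γ` be a finite abelian group and `𝔱` an automorphism whose only fixed point
is `0`.  In the semidirect product `Γ ⋊ ℤ` (where `n` acts as `𝔱ⁿ`), the conjugacy
class of `(0, 1)` is exactly `{(a, 1) : a ∈ Γ}`, and it has exactly `|Γ|` elements. -/
theorem stmt7 {Γ : Type*} [AddCommGroup Γ] [Finite Γ] (t : Γ ≃+ Γ)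
    (hfix : ∀ a : Γ, t a = a → a = 0) :
    ({x : Multiplicative Γ ⋊[tAction t] Multiplicative ℤ |
        ∃ h, h * ⟨Multiplicative.ofAdd 0, Multiplicative.ofAdd 1⟩ * h⁻¹ = x} =
      {x : Multiplicative Γ ⋊[tAction t] Multiplicative ℤ |
        ∃ a : Γ, x = ⟨Multiplicative.ofAdd a, Multiplicative.ofAdd 1⟩}) ∧
    ({x : Multiplicative Γ ⋊[tAction t] Multiplicative ℤ |
        ∃ h, h * ⟨Multiplicative.ofAdd 0, Multiplicative.ofAdd 1⟩ * h⁻¹ = x}).ncard =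
      Nat.card Γ := by
  have key : ({x : Multiplicative Γ ⋊[tAction t] Multiplicative ℤ |
        ∃ h, h * ⟨Multiplicative.ofAdd 0, Multiplicative.ofAdd 1⟩ * h⁻¹ = x} =
      {x : Multiplicative Γ ⋊[tAction t] Multiplicative ℤ |
        ∃ a : Γ, x = ⟨Multiplicative.ofAdd a, Multiplicative.ofAdd 1⟩}) := by
    have hinj : Function.Injective (fun b : Γ => b - t b) := by
      intro b c hbc
      have hbc' : b - t b = c - t c := hbc
      have h0 : t (b - c) = b - c := by
        rw [map_sub, sub_eq_sub_iff_add_eq_add]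
        rw [sub_eq_sub_iff_add_eq_add] at hbc'
        rw [add_comm (t b), hbc', add_comm]
      exact sub_eq_zero.mp (hfix _ h0)
    have hsurj := Finite.surjective_of_injective hinj
    have hact : ∀ b : Γ, (tAction t) (Multiplicative.ofAdd 1) (Multiplicative.ofAdd b)
        = Multiplicative.ofAdd (t b) := by
      intro b
      simp [tAction]
    ext x
    simp only [Set.mem_ofPred_eq]
    constructor
    · rintro ⟨h, rfl⟩
      refine ⟨Multiplicative.toAdd (h * ⟨Multiplicative.ofAdd 0, Multiplicative.ofAdd 1⟩ * h⁻¹).left, ?_⟩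
      ext1
      · rfl
      · simp
    · rintro ⟨a, rfl⟩
      obtain ⟨b, hb⟩ := hsurj a
      refine ⟨⟨Multiplicative.ofAdd b, 1⟩, ?_⟩
      rw [mul_inv_eq_iff_eq_mul]
      ext1
      · have hb' : b = a + t b := by rw [← hb]; simp
        simp only [SemidirectProduct.mul_left, map_one, MulAut.one_apply, hact]
        rw [← ofAdd_add, ← ofAdd_add, ← hb', add_zero]
      · simp
  refine ⟨key, ?_⟩
  rw [key]
  have hr : {x : Multiplicative Γ ⋊[tAction t] Multiplicative ℤ |
        ∃ a : Γ, x = ⟨Multiplicative.ofAdd a, Multiplicative.ofAdd 1⟩} =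
      Set.range (fun a : Γ => (⟨Multiplicative.ofAdd a, Multiplicative.ofAdd 1⟩ :
        Multiplicative Γ ⋊[tAction t] Multiplicative ℤ)) := by
    ext x
    simp only [Set.mem_ofPred_eq, Set.mem_range, eq_comm]
  rw [hr, ← Nat.card_coe_set_eq, Nat.card_range_of_injective]
  intro a b hab
  exact Multiplicative.ofAdd.injective (congrArg SemidirectProduct.left hab)
end

section
/- Let G be a finite group, t ∈ G, and Γ ≤ G an abelian subgroup such that t normalizes Γ and the only element of Γ commuting with t is the identity. Then: (i) the map a ↦ a t a⁻¹ from Γ to G is injective; (ii) its image X = {a t a⁻¹ : a ∈ Γ} equals the coset {γ t : γ ∈ Γ}; (iii) X is contained in the conjugacy class of t in G and is closed under conjugation, i.e., x y x⁻¹ ∈ X for all x, y ∈ X. In particular, X is a subrack of the conjugacy class of t with exactly |Γ| elements. -/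
/-- Let `G` be a finite group, `t ∈ G`, and `Γ ≤ G` abelian, normalized by `t`, with
trivial centralizer of `t` in `Γ`.  Then `a ↦ a t a⁻¹` is injective on `Γ`, its image
`X` is the coset `Γ t`, `X` is contained in the conjugacy class of `t` and closed
under conjugation, and `X` has exactly `|Γ|` elements. -/
theorem stmt8 {G : Type*} [Group G] [Finite G] (t : G) (Γ : Subgroup G)
    (hab : ∀ a ∈ Γ, ∀ b ∈ Γ, a * b = b * a)
    (hnorm : t ∈ Subgroup.normalizer (Γ : Set G))
    (hcent : ∀ a ∈ Γ, a * t = t * a → a = 1) :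
    Set.InjOn (fun a : G => a * t * a⁻¹) (Γ : Set G) ∧
    (fun a : G => a * t * a⁻¹) '' (Γ : Set G) = (fun γ : G => γ * t) '' (Γ : Set G) ∧
    (∀ x ∈ (fun a : G => a * t * a⁻¹) '' (Γ : Set G), ∃ h : G, h * t * h⁻¹ = x) ∧
    (∀ x ∈ (fun a : G => a * t * a⁻¹) '' (Γ : Set G),
      ∀ y ∈ (fun a : G => a * t * a⁻¹) '' (Γ : Set G),
        x * y * x⁻¹ ∈ (fun a : G => a * t * a⁻¹) '' (Γ : Set G)) ∧
    ((fun a : G => a * t * a⁻¹) '' (Γ : Set G)).ncard = Nat.card Γ := by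
  have hn : ∀ a ∈ Γ, t * a * t⁻¹ ∈ Γ := fun a ha =>
    (Subgroup.mem_normalizer_iff.mp hnorm a).mp ha
  have hinj : Set.InjOn (fun a : G => a * t * a⁻¹) (Γ : Set G) := by
    intro a ha b hb hEq
    have hEq' : a * t * a⁻¹ = b * t * b⁻¹ := hEq
    have h1 : b⁻¹ * a = 1 := by
      apply hcent _ (Γ.mul_mem (Γ.inv_mem hb) ha)
      calc b⁻¹ * a * t = b⁻¹ * (a * t * a⁻¹) * a := by group
        _ = b⁻¹ * (b * t * b⁻¹) * a := by rw [hEq']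
        _ = t * (b⁻¹ * a) := by group
    exact (inv_mul_eq_one.mp h1).symm
  have himg : (fun a : G => a * t * a⁻¹) '' (Γ : Set G)
      = (fun γ : G => γ * t) '' (Γ : Set G) := by
    apply Set.eq_of_subset_of_ncard_le
    · rintro _ ⟨a, ha, rfl⟩
      refine ⟨a * (t * a⁻¹ * t⁻¹), Γ.mul_mem ha (hn _ (Γ.inv_mem ha)), ?_⟩
      simp [mul_assoc]
    · rw [Set.ncard_image_of_injOn hinj]
      exact Set.ncard_image_le (Set.toFinite _)
    · exact Set.toFinite _
  refine ⟨hinj, himg, ?_, ?_, ?_⟩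
  · rintro _ ⟨a, _, rfl⟩
    exact ⟨a, rfl⟩
  · rw [himg]
    rintro _ ⟨a, ha, rfl⟩ _ ⟨b, hb, rfl⟩
    refine ⟨a * (t * b * t⁻¹) * (t * a⁻¹ * t⁻¹),
      Γ.mul_mem (Γ.mul_mem ha (hn _ hb)) (hn _ (Γ.inv_mem ha)), ?_⟩
    simp [mul_assoc]
  · rw [Set.ncard_image_of_injOn hinj]
    rfl
end

section
/- Let G be a finite solvable group and g ∈ G an element whose conjugacy class O = O_g^G generates G. Let H be a finite group, h ∈ H, and O' = O_h^H the conjugacy class of h in H. Suppose there exists a bijection f : O → O' satisfying f(x y x⁻¹) = f(x) f(y) f(x)⁻¹ for all x, y ∈ O. Then the subgroup of H generated by O' is solvable. -/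
/-- Let `G` be a finite solvable group whose conjugacy class of `g` generates `G`,
let `H` be a finite group and `h ∈ H`, and suppose `f` restricts to a bijection from
the conjugacy class of `g` onto the conjugacy class of `h` that intertwines
conjugation (an isomorphism of racks).  Then the subgroup of `H` generated by the
conjugacy class of `h` is solvable. -/
theorem stmt9 {G H : Type*} [Group G] [Finite G] [Group.IsSolvable G]
    [Group H] [Finite H]
    (g : G) (hgen : Subgroup.closure {x : G | ∃ k : G, k * g * k⁻¹ = x} = ⊤)
    (h : H) (f : G → H)
    (hbij : Set.BijOn f {x : G | ∃ k : G, k * g * k⁻¹ = x}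
      {y : H | ∃ k : H, k * h * k⁻¹ = y})
    (hf : ∀ x ∈ {x : G | ∃ k : G, k * g * k⁻¹ = x},
      ∀ y ∈ {x : G | ∃ k : G, k * g * k⁻¹ = x},
        f (x * y * x⁻¹) = f x * f y * (f x)⁻¹) :
    Group.IsSolvable (Subgroup.closure {y : H | ∃ k : H, k * h * k⁻¹ = y}) := by
  set O : Set G := {x : G | ∃ k : G, k * g * k⁻¹ = x} with hO
  set O' : Set H := {y : H | ∃ k : H, k * h * k⁻¹ = y} with hO'
  have hOc : ∀ a : G, ∀ y ∈ O, a * y * a⁻¹ ∈ O := by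
    rintro a y ⟨k, rfl⟩
    exact ⟨a * k, by group⟩
  let P : Subgroup (G × H) := Subgroup.closure ((fun x => (x, f x)) '' O)
  have hPmap : P.map (MonoidHom.snd G H) = Subgroup.closure O' := by
    rw [MonoidHom.map_closure, ← Set.image_comp, ← hbij.image_eq]
    rfl
  have hPQ : ∀ p ∈ P, ∀ y ∈ O, f (p.1 * y * p.1⁻¹) = p.2 * f y * p.2⁻¹ := by
    intro p hp
    induction hp using Subgroup.closure_induction with
    | mem p hp =>
      obtain ⟨x, hx, rfl⟩ := hp
      exact fun y hy => hf x hx y hy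
    | one => intro y _; simp
    | mul p q _ _ ihp ihq =>
      intro y hy
      have h1 := ihp _ (hOc q.1 y hy)
      rw [ihq y hy] at h1
      simpa [mul_assoc] using h1
    | inv p _ ih =>
      intro y hy
      have h1 := ih _ (hOc p.1⁻¹ y hy)
      have h2 : p.1 * (p.1⁻¹ * y * p.1⁻¹⁻¹) * p.1⁻¹ = y := by group
      rw [h2] at h1
      rw [h1]
      simp [mul_assoc]
  have hP : Group.IsSolvable P := by
    let φ : P →* G := (MonoidHom.fst G H).comp P.subtype
    have hk : Group.IsSolvable φ.ker := by
      apply Group.isSolvable_of_comm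
      rintro ⟨⟨⟨a, b⟩, hp⟩, ha⟩ ⟨⟨⟨c, d⟩, hq⟩, hc⟩
      have ha' : a = 1 := ha
      have hc' : c = 1 := hc
      subst ha' hc'
      have hd : d ∈ Subgroup.closure O' := hPmap ▸ ⟨(1, d), hq, rfl⟩
      have hle : Subgroup.closure O' ≤ Subgroup.centralizer {b} := by
        rw [Subgroup.closure_le]
        intro z hz
        obtain ⟨y, hy, rfl⟩ := hbij.surjOn hz
        have h1 := hPQ _ hp y hy
        simp only [one_mul, inv_one, mul_one] at h1
        rw [SetLike.mem_coe, Subgroup.mem_centralizer_singleton_iff]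
        have h2 := eq_mul_inv_iff_mul_eq.mp h1
        first | exact h2 | exact h2.symm
      have h3 := Subgroup.mem_centralizer_singleton_iff.mp (hle hd)
      have h4 : b * d = d * b := by first | exact h3 | exact h3.symm
      apply Subtype.ext
      apply Subtype.ext
      exact Prod.ext rfl h4
    exact Group.isSolvable_of_ker_le_range φ.ker.subtype φ (by simp)
  rw [← hPmap]
  exact Group.isSolvable_of_surjective ((MonoidHom.snd G H).subgroupMap_surjective P)
end

section
/- Let E be a finite-dimensional real inner product space and w : E → E a linear isometric equivalence with no nonzero fixed vector (w(v) = v implies v = 0). Then for every nonzero α ∈ E there exists a nonzero v ∈ E with s_α(w(v)) = v, where s_α is the orthogonal reflection s_α(x) = x − (2⟨x, α⟩/⟨α, α⟩)·α. In other words, for every nonzero α, the composition s_α ∘ w has a nonzero fixed vector. -/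
/-- Let `E` be a finite-dimensional real inner product space and `w` a linear
isometric equivalence of `E` with no nonzero fixed vector.  Then for every nonzero
`α ∈ E` the composition `s_α ∘ w` of `w` with the orthogonal reflection in the
hyperplane orthogonal to `α` has a nonzero fixed vector. -/
theorem stmt11 {E : Type*} [NormedAddCommGroup E] [InnerProductSpace ℝ E]
    [FiniteDimensional ℝ E]
    (w : E ≃ₗᵢ[ℝ] E) (hw : ∀ v : E, w v = v → v = 0)
    (α : E) (hα : α ≠ 0) :
    ∃ v : E, v ≠ 0 ∧
      w v - (2 * (inner ℝ (w v) α : ℝ) / (inner ℝ α α : ℝ)) • α = v := by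
  have hinj : Function.Injective (w.toLinearEquiv.toLinearMap - LinearMap.id : E →ₗ[ℝ] E) := by
    rw [injective_iff_map_eq_zero]
    intro v hv
    apply hw
    have h : w v - v = 0 := hv
    exact sub_eq_zero.mp h
  obtain ⟨v, hv⟩ := LinearMap.injective_iff_surjective.mp hinj α
  have hv' : w v - v = α := hv
  have hwv : v = w v - α := by rw [← hv']; abel
  have h0 : (inner ℝ α α : ℝ) ≠ 0 := inner_self_ne_zero.mpr hα
  have hn : (inner ℝ (w v) (w v) : ℝ) = inner ℝ v v := w.inner_map_map v v
  have hk : 2 * (inner ℝ (w v) α : ℝ) = inner ℝ α α := by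
    have h2 : (inner ℝ v v : ℝ) = inner ℝ (w v - α) (w v - α) := by rw [← hwv]
    rw [real_inner_sub_sub_self] at h2
    linarith
  refine ⟨v, ?_, ?_⟩
  · rintro rfl
    apply hα
    rw [← hv']
    simp
  · rw [hk, div_self h0, one_smul]
    exact hwv.symm
end
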